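/- Let d ≥ 1 and let 𝔻 be a finitely generated multiplicative set in ℝ[x₁,…,x_d] such that 1 + x_j² ∈ 𝔻 for every j = 1,…,d−1, and let A := 𝔻⁻¹ℝ[x₁,…,x_d]. Then every linear functional L on A with L(a²) ≥ 0 for all a ∈ A admits a positive Borel measure μ on ℝ^d such that μ(Z(q)) = 0 for every q ∈ 𝔻 and, for all p ∈ ℝ[x₁,…,x_d] and q ∈ 𝔻, the function x ↦ p(x)/q(x) is μ-integrable and L(p/q) = ∫_{ℝ^d} p(x)/q(x) dμ(x). -/

import Mathlib

theorem uni_nonneg (n : ℕ) : ∀ (p : Polynomial ℝ), p.natDegree ≤ n → (∀ x, 0 ≤ p.eval x) →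
    ∀ M : Polynomial ℝ →ₗ[ℝ] ℝ, (∀ a, 0 ≤ M (a ^ 2)) → 0 ≤ M p := by
  induction n using Nat.strong_induction_on with
  | _ n ih =>
  intro p hpn hp M hM
  have hM1 : 0 ≤ M 1 := by simpa using hM 1
  have hC : ∀ m : ℝ, 0 ≤ m → 0 ≤ M (Polynomial.C m) := by
    intro m hm
    have : Polynomial.C m = m • (1 : Polynomial ℝ) := by
      rw [Polynomial.smul_eq_C_mul, mul_one]
    rw [this, map_smul, smul_eq_mul]
    positivity
  by_cases hdeg : 0 < p.degree
  swap
  · have h0 := Polynomial.eq_C_of_degree_le_zero (not_lt.mp hdeg)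
    rw [h0]
    apply hC
    have := hp 0
    rw [h0] at this
    simpa using this
  have hlim : Filter.Tendsto (fun x => p.eval x) (Filter.cocompact ℝ) Filter.atTop := by
    have : (fun x => p.eval x) = fun x => |p.eval x| := by
      funext x; rw [abs_of_nonneg (hp x)]
    rw [this, cocompact_eq_atBot_atTop]
    exact Filter.Tendsto.sup (p.abs_tendsto_atBot hdeg) (p.abs_tendsto_atTop hdeg)
  obtain ⟨t, ht⟩ := p.continuous.exists_forall_le hlim
  set m := p.eval t with hm
  obtain ⟨q1, hq1⟩ : (Polynomial.X - Polynomial.C t) ∣ (p - Polynomial.C m) := by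
    rw [Polynomial.dvd_iff_isRoot]; simp [hm]
  have hq1t : q1.eval t = 0 := by
    have hmin : IsLocalMin (fun x => p.eval x) t := Filter.Eventually.of_forall ht
    have h1 := hmin.deriv_eq_zero
    rw [Polynomial.deriv] at h1
    have h2 : p = (Polynomial.X - Polynomial.C t) * q1 + Polynomial.C m := by
      rw [← hq1]; ring
    rw [h2] at h1
    simpa using h1
  obtain ⟨q2, hq2⟩ : (Polynomial.X - Polynomial.C t) ∣ q1 := by
    rw [Polynomial.dvd_iff_isRoot]; exact hq1t
  have hp2 : p = (Polynomial.X - Polynomial.C t) ^ 2 * q2 + Polynomial.C m := by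
    have : p = (p - Polynomial.C m) + Polynomial.C m := by ring
    rw [this, hq1, hq2]; ring
  have hq2nn' : ∀ x, x ≠ t → 0 ≤ q2.eval x := by
    intro x hx
    have h1 := ht x
    rw [hp2] at h1
    simp only [Polynomial.eval_add, Polynomial.eval_mul, Polynomial.eval_pow, Polynomial.eval_sub,
      Polynomial.eval_X, Polynomial.eval_C] at h1
    have h2 : 0 < (x - t) ^ 2 := by
      have : x - t ≠ 0 := sub_ne_zero.mpr hx
      positivity
    have h3 : 0 ≤ (x - t) ^ 2 * q2.eval x := by linarith
    exact nonneg_of_mul_nonneg_right h3 h2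
  have hq2nn : ∀ x, 0 ≤ q2.eval x := by
    have hcl : IsClosed {x : ℝ | 0 ≤ q2.eval x} := isClosed_le continuous_const q2.continuous
    have hd : Dense {x : ℝ | 0 ≤ q2.eval x} :=
      (dense_compl_singleton t).mono fun x hx => hq2nn' x hx
    intro x
    have := hcl.closure_eq ▸ hd x
    exact this
  have hne : q2 ≠ 0 := by
    rintro rfl
    rw [hp2] at hdeg
    simp only [mul_zero, zero_add] at hdeg
    exact absurd Polynomial.degree_C_le (not_le.mpr hdeg)
  have hdeg2 : p.natDegree = 2 + q2.natDegree := by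
    have hX : (Polynomial.X - Polynomial.C t) ^ 2 ≠ 0 := pow_ne_zero _ (Polynomial.X_sub_C_ne_zero t)
    rw [hp2, Polynomial.natDegree_add_C, Polynomial.natDegree_mul hX hne, Polynomial.natDegree_pow,
      Polynomial.natDegree_X_sub_C]
  have := ih q2.natDegree (by omega) q2 le_rfl hq2nn
    (M ∘ₗ LinearMap.mulLeft ℝ ((Polynomial.X - Polynomial.C t) ^ 2)) (by
      intro a
      have := hM ((Polynomial.X - Polynomial.C t) * a)
      rw [mul_pow] at this
      simpa using this)
  rw [hp2, map_add]
  have h3 := hC m (hp t)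
  simp only [LinearMap.comp_apply, LinearMap.mulLeft_apply] at this
  linarith

theorem psd_abs_le {A : Type*} [CommRing A] [Algebra ℝ A] (M : A →ₗ[ℝ] ℝ)
    (hM : ∀ b, 0 ≤ M (b ^ 2)) (b : A) : 2 * |M b| ≤ M 1 + M (b ^ 2) := by
  have h1 := hM (1 + b)
  have h2 := hM (1 - b)
  have e1 : (1 + b) ^ 2 = 1 + (2 : ℝ) • b + b ^ 2 := by
    rw [two_smul]; ring
  have e2 : (1 - b) ^ 2 = 1 - (2 : ℝ) • b + b ^ 2 := by
    rw [two_smul]; ring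
  rw [e1] at h1
  rw [e2] at h2
  simp only [map_add, map_sub, map_smul, smul_eq_mul] at h1 h2
  rcases abs_cases (M b) with h | h <;> linarith

theorem exists_extreme_functional {A : Type*} [CommRing A] [Algebra ℝ A] {ι : Type*} [Countable ι]
    (a : ι → A) (hspan : Submodule.span ℝ (Set.range a) = ⊤) (i0 : ι) (hi0 : a i0 = 1)
    (L0 : A →ₗ[ℝ] ℝ) (hL0 : ∀ b, 0 ≤ L0 (b ^ 2)) (f : A) (hf : L0 f < 0) :
    ∃ L1 : A →ₗ[ℝ] ℝ, (∀ b, 0 ≤ L1 (b ^ 2)) ∧ L1 f < 0 ∧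
      ∀ w : A, (∀ b, 0 ≤ L1 (w * b ^ 2)) → (∀ b, 0 ≤ L1 ((1 - w) * b ^ 2)) →
        ∃ θ : ℝ, ∀ b, L1 (w * b) = θ * L1 b := by
  obtain ⟨δ, hδpos, hδ⟩ := ENNReal.exists_pos_tsum_mul_lt_of_countable (ε := 1) one_ne_zero
    (fun i => ENNReal.ofReal (L0 (a i ^ 2))) (fun i => ENNReal.ofReal_ne_top)
  let Kl : Set (A →ₗ[ℝ] ℝ) := {M | (∀ b, 0 ≤ M (b ^ 2)) ∧
    ∀ s : Finset ι, ∑ i ∈ s, (δ i : ℝ) * M (a i ^ 2) ≤ 1}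
  let K : Set (A → ℝ) := {g | (∀ x y, g (x + y) = g x + g y) ∧ (∀ (c : ℝ) x, g (c • x) = c * g x) ∧
    (∀ b, 0 ≤ g (b ^ 2)) ∧ ∀ s : Finset ι, ∑ i ∈ s, (δ i : ℝ) * g (a i ^ 2) ≤ 1}
  have hKl : ∀ M : A →ₗ[ℝ] ℝ, M ∈ Kl → (M : A → ℝ) ∈ K := fun M hM =>
    ⟨fun x y => map_add M x y, fun c x => by simp, hM.1, hM.2⟩
  have hK' : ∀ g ∈ K, ∃ M ∈ Kl, (M : A → ℝ) = g := by
    intro g hg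
    exact ⟨{ toFun := g, map_add' := hg.1, map_smul' := fun c x => hg.2.1 c x }, ⟨hg.2.2.1, hg.2.2.2⟩, rfl⟩
  have hL0K : L0 ∈ Kl := by
    refine ⟨hL0, fun s => ?_⟩
    have h1 : ∑ i ∈ s, ENNReal.ofReal (L0 (a i ^ 2)) * (δ i : ENNReal) ≤ 1 :=
      (ENNReal.sum_le_tsum s).trans hδ.le
    have h2 : ∑ i ∈ s, ENNReal.ofReal (L0 (a i ^ 2)) * (δ i : ENNReal)
        = ENNReal.ofReal (∑ i ∈ s, (δ i : ℝ) * L0 (a i ^ 2)) := by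
      rw [ENNReal.ofReal_sum_of_nonneg (fun i _ => mul_nonneg (NNReal.coe_nonneg (δ i)) (hL0 (a i)))]
      refine Finset.sum_congr rfl fun i _ => ?_
      rw [mul_comm, ENNReal.ofReal_mul (NNReal.coe_nonneg (δ i)), ENNReal.ofReal_coe_nnreal]
    rw [h2] at h1
    simpa using h1
  -- bounds
  have hb1 : ∀ M ∈ Kl, ∀ i, M (a i ^ 2) ≤ 1 / δ i := by
    intro M hM i
    have := hM.2 {i}
    rw [Finset.sum_singleton] at this
    have hp : (0 : ℝ) < δ i := hδpos i
    rw [le_div_iff₀ hp]; linarith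
  have hb2 : ∀ b : A, ∃ C : ℝ, ∀ M ∈ Kl, |M b| ≤ C := by
    intro b
    have hb : b ∈ Submodule.span ℝ (Set.range a) := hspan ▸ Submodule.mem_top
    induction hb using Submodule.span_induction with
    | mem x hx =>
      obtain ⟨i, rfl⟩ := hx
      refine ⟨1 / δ i0 + 1 / δ i, fun M hM => ?_⟩
      have h1 := psd_abs_le M hM.1 (a i)
      have h2 := hb1 M hM i
      have h3 := hb1 M hM i0
      rw [hi0, one_pow] at h3
      have := abs_nonneg (M (a i))
      linarith
    | zero => exact ⟨0, fun M _ => by simp⟩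
    | add x y _ _ hx hy =>
      obtain ⟨C, hC⟩ := hx
      obtain ⟨D, hD⟩ := hy
      exact ⟨C + D, fun M hM => by
        rw [map_add]; exact (abs_add_le _ _).trans (add_le_add (hC M hM) (hD M hM))⟩
    | smul c x _ hx =>
      obtain ⟨C, hC⟩ := hx
      exact ⟨|c| * C, fun M hM => by
        rw [map_smul, smul_eq_mul, abs_mul]
        exact mul_le_mul_of_nonneg_left (hC M hM) (abs_nonneg c)⟩
  choose C hC using hb2
  have hKclosed : IsClosed K := by
    simp only [K, Set.ofPred_and, Set.ofPred_forall]
    refine IsClosed.inter ?_ (IsClosed.inter ?_ (IsClosed.inter ?_ ?_))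
    · exact isClosed_iInter fun x => isClosed_iInter fun y =>
        isClosed_eq (by fun_prop) (by fun_prop)
    · exact isClosed_iInter fun x => isClosed_iInter fun y =>
        isClosed_eq (by fun_prop) (by fun_prop)
    · exact isClosed_iInter fun x => isClosed_le (by fun_prop) (by fun_prop)
    · exact isClosed_iInter fun x => isClosed_le (by fun_prop) (by fun_prop)
  have hKcomp : IsCompact K := by
    refine (isCompact_univ_pi (fun b : A => isCompact_Icc (a := -C b) (b := C b))).of_isClosed_subset
      hKclosed ?_
    intro g hg b _
    obtain ⟨M, hM, rfl⟩ := hK' g hg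
    exact abs_le.mp (hC b M hM)
  obtain ⟨g0, hg0K, hg0⟩ := hKcomp.exists_isMinOn ⟨_, hKl L0 hL0K⟩
    ((continuous_apply f).continuousOn (s := K))
  let F : Set (A → ℝ) := K ∩ {g | g f = g0 f}
  have hFcomp : IsCompact F := hKcomp.inter_right (isClosed_eq (continuous_apply f) continuous_const)
  have hFne : F.Nonempty := ⟨g0, hg0K, rfl⟩
  obtain ⟨g1, hg1F, hg1⟩ := hFcomp.extremePoints_nonempty hFne
  have hg1K := hg1F.1
  obtain ⟨L1, hL1, rfl⟩ := hK' g1 hg1K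
  have hL1f : L1 f < 0 := by
    have h1 : L1 f = g0 f := hg1F.2
    have h2 : g0 f ≤ L0 f := hg0 (hKl L0 hL0K)
    linarith
  have hext : ∀ M1 ∈ Kl, ∀ M2 ∈ Kl, ∀ α β : ℝ, 0 < α → 0 < β → α + β = 1 →
      L1 = α • M1 + β • M2 → M1 = L1 := by
    intro M1 h1 M2 h2 α β hα hβ hαβ he
    have e : α * M1 f + β * M2 f = g0 f := by
      have h3 : L1 f = g0 f := hg1F.2
      rw [← h3, he]; simp
    have m1 : g0 f ≤ M1 f := hg0 (hKl M1 h1)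
    have m2 : g0 f ≤ M2 f := hg0 (hKl M2 h2)
    have f1 : M1 f = g0 f := by
      refine le_antisymm ?_ m1
      by_contra hlt
      push Not at hlt
      have : α * g0 f < α * M1 f := mul_lt_mul_of_pos_left hlt hα
      have : β * g0 f ≤ β * M2 f := mul_le_mul_of_nonneg_left m2 hβ.le
      have : α * g0 f + β * g0 f = g0 f := by rw [← add_mul, hαβ, one_mul]
      linarith
    have f2 : M2 f = g0 f := by
      have : α * g0 f + β * g0 f = g0 f := by rw [← add_mul, hαβ, one_mul]
      rw [f1] at e
      have : β * M2 f = β * g0 f := by linarith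
      exact mul_left_cancel₀ hβ.ne' this
    have := hg1 (show (M1 : A → ℝ) ∈ F from ⟨hKl M1 h1, f1⟩)
      (show (M2 : A → ℝ) ∈ F from ⟨hKl M2 h2, f2⟩)
      ⟨α, β, hα, hβ, hαβ, by rw [he]; rfl⟩
    exact DFunLike.coe_injective this
  -- the additive functional N
  let N : (A →ₗ[ℝ] ℝ) → ℝ := fun M => ∑' i, (δ i : ℝ) * M (a i ^ 2)
  have hzero : ∀ M : A →ₗ[ℝ] ℝ, (∀ b, 0 ≤ M (b ^ 2)) → Summable (fun i => (δ i : ℝ) * M (a i ^ 2)) →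
      N M = 0 → M = 0 := by
    intro M hM hs hN
    have h0 : ∀ i, (δ i : ℝ) * M (a i ^ 2) = 0 := by
      have h9 : HasSum (fun i => (δ i : ℝ) * M (a i ^ 2)) 0 := by
        have h10 := hs.hasSum
        change HasSum _ (N M) at h10
        rwa [hN] at h10
      have := (hasSum_zero_iff_of_nonneg (fun i => mul_nonneg (δ i).2 (hM (a i)))).mp h9
      exact fun i => congrFun this i
    have h1 : ∀ i, M (a i ^ 2) = 0 := fun i =>
      (mul_eq_zero.mp (h0 i)).resolve_left (by exact_mod_cast (hδpos i).ne')
    have h2 : M 1 = 0 := by simpa [hi0] using h1 i0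
    refine LinearMap.ext_on_range hspan fun i => ?_
    have := psd_abs_le M hM (a i)
    rw [h1, h2] at this
    have h3 : |M (a i)| = 0 := le_antisymm (by linarith) (abs_nonneg _)
    simpa using h3
  refine ⟨L1, hL1.1, hL1f, fun w hw hw' => ?_⟩
  let M1 : A →ₗ[ℝ] ℝ := L1 ∘ₗ LinearMap.mulLeft ℝ w
  let M2 : A →ₗ[ℝ] ℝ := L1 ∘ₗ LinearMap.mulLeft ℝ (1 - w)
  have hM12 : L1 = M1 + M2 := by
    ext b; simp only [M1, M2, LinearMap.add_apply, LinearMap.comp_apply, LinearMap.mulLeft_apply]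
    rw [← map_add]; congr 1; ring
  have hsL : Summable (fun i => (δ i : ℝ) * L1 (a i ^ 2)) :=
    summable_of_sum_le (fun i => mul_nonneg (δ i).2 (hL1.1 _)) hL1.2
  have hs1 : Summable (fun i => (δ i : ℝ) * M1 (a i ^ 2)) := by
    refine Summable.of_nonneg_of_le (fun i => mul_nonneg (δ i).2 (hw _)) (fun i => ?_) hsL
    refine mul_le_mul_of_nonneg_left ?_ (δ i).2
    rw [hM12]; have := hw' (a i); simpa [M2] using this
  have hs2 : Summable (fun i => (δ i : ℝ) * M2 (a i ^ 2)) := by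
    refine Summable.of_nonneg_of_le (fun i => mul_nonneg (δ i).2 (hw' _)) (fun i => ?_) hsL
    refine mul_le_mul_of_nonneg_left ?_ (δ i).2
    rw [hM12]; have := hw (a i); simpa [M1] using this
  have hN1 : 0 ≤ N M1 := tsum_nonneg fun i => mul_nonneg (δ i).2 (hw _)
  have hN2 : 0 ≤ N M2 := tsum_nonneg fun i => mul_nonneg (δ i).2 (hw' _)
  have hNs : N L1 = N M1 + N M2 := by
    simp only [N]
    rw [← hs1.tsum_add hs2]
    refine tsum_congr fun i => ?_
    rw [hM12, LinearMap.add_apply]; ring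
  have hNL1 : N L1 ≤ 1 := hsL.tsum_le_of_sum_le hL1.2
  rcases hN1.eq_or_lt with h1 | h1
  · refine ⟨0, fun b => ?_⟩
    have := hzero M1 hw hs1 h1.symm
    have := LinearMap.congr_fun this b
    simpa [M1] using this
  rcases hN2.eq_or_lt with h2 | h2
  · refine ⟨1, fun b => ?_⟩
    have h3 := hzero M2 hw' hs2 h2.symm
    have h4 : M1 b = L1 b := by rw [hM12, h3, add_zero]
    simpa [M1] using h4
  have hNpos : 0 < N L1 := by linarith
  have mem : ∀ M : A →ₗ[ℝ] ℝ, (∀ b, 0 ≤ M (b ^ 2)) → Summable (fun i => (δ i : ℝ) * M (a i ^ 2)) →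
      0 < N M → (N L1 / N M) • M ∈ Kl := by
    intro M hM hs hN
    have hc : 0 ≤ N L1 / N M := by positivity
    refine ⟨fun b => ?_, fun s => ?_⟩
    · simp only [LinearMap.smul_apply, smul_eq_mul]
      exact mul_nonneg hc (hM b)
    · have e : ∑ i ∈ s, (δ i : ℝ) * ((N L1 / N M) • M) (a i ^ 2)
          = (N L1 / N M) * ∑ i ∈ s, (δ i : ℝ) * M (a i ^ 2) := by
        rw [Finset.mul_sum]
        refine Finset.sum_congr rfl fun i _ => ?_
        simp only [LinearMap.smul_apply, smul_eq_mul]; ring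
      rw [e]
      have h5 : ∑ i ∈ s, (δ i : ℝ) * M (a i ^ 2) ≤ N M :=
        hs.sum_le_tsum s fun i _ => mul_nonneg (δ i).2 (hM _)
      calc _ ≤ (N L1 / N M) * N M := mul_le_mul_of_nonneg_left h5 hc
        _ = N L1 := by field_simp
        _ ≤ 1 := hNL1
  have h6 := hext _ (mem M1 hw hs1 h1) _ (mem M2 hw' hs2 h2) (N M1 / N L1) (N M2 / N L1)
    (by positivity) (by positivity) (by rw [← add_div, ← hNs]; field_simp) (by
      rw [smul_smul, smul_smul]
      have e1 : N M1 / N L1 * (N L1 / N M1) = 1 := by field_simp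
      have e2 : N M2 / N L1 * (N L1 / N M2) = 1 := by field_simp
      rw [e1, e2, one_smul, one_smul]; exact hM12)
  refine ⟨N M1 / N L1, fun b => ?_⟩
  have h7 := LinearMap.congr_fun h6 b
  simp only [LinearMap.smul_apply, smul_eq_mul] at h7
  have h8 : L1 (w * b) = M1 b := by simp [M1]
  rw [h8, ← h7]
  field_simp

theorem key_nonneg {A : Type*} [CommRing A] [Algebra ℝ A] {σ : Type*} [Countable σ]
    (φ : MvPolynomial σ ℝ →ₐ[ℝ] A) (hφ : Function.Surjective φ) {d : ℕ} (hd : 1 ≤ d)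
    (ψ : MvPolynomial (Fin d) ℝ →ₐ[ℝ] A)
    (hu : ∀ j : Fin d, (j : ℕ) < d - 1 → ∃ u : A, u * (1 + ψ (MvPolynomial.X j) ^ 2) = 1)
    (L : A →ₗ[ℝ] ℝ) (hL : ∀ b, 0 ≤ L (b ^ 2)) (p : MvPolynomial (Fin d) ℝ)
    (hp : ∀ x, 0 ≤ MvPolynomial.eval x p) : 0 ≤ L (ψ p) := by
  by_contra hneg
  push Not at hneg
  have hspan : Submodule.span ℝ (Set.range fun m : σ →₀ ℕ => φ (MvPolynomial.monomial m 1)) = ⊤ := by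
    have h1 := (MvPolynomial.basisMonomials σ ℝ).span_eq
    have h2 := congrArg (Submodule.map φ.toLinearMap) h1
    rw [Submodule.map_span, ← Set.range_comp, Submodule.map_top, LinearMap.range_eq_top.mpr hφ] at h2
    rw [← h2]
    congr 2
  obtain ⟨L1, hL1, hneg1, hw⟩ := exists_extreme_functional
    (fun m : σ →₀ ℕ => φ (MvPolynomial.monomial m 1)) hspan 0 (by
      change φ 1 = 1
      exact map_one φ) L hL (ψ p) hneg
  have hlam : ∀ j : Fin d, ∃ l : ℝ, (j : ℕ) < d - 1 →
      ∀ b, L1 (ψ (MvPolynomial.X j) * b) = l * L1 b := by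
    intro j
    by_cases hj : (j : ℕ) < d - 1
    swap
    · exact ⟨0, fun h => absurd h hj⟩
    obtain ⟨u, hu⟩ := hu j hj
    set x := ψ (MvPolynomial.X j) with hx
    obtain ⟨α, hα⟩ := hw u (fun b => by
      have e : u * b ^ 2 = (u * b) ^ 2 + (x * u * b) ^ 2 := by
        linear_combination (-u * b ^ 2) * hu
      rw [e, map_add]; exact add_nonneg (hL1 _) (hL1 _)) (fun b => by
      have e : (1 - u) * b ^ 2 = (x * u * b) ^ 2 + (x ^ 2 * u * b) ^ 2 := by
        linear_combination (-b ^ 2 - x ^ 2 * u * b ^ 2) * hu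
      rw [e, map_add]; exact add_nonneg (hL1 _) (hL1 _))
    obtain ⟨h, hh⟩ : ∃ h : A, 2 * h = 1 := ⟨algebraMap ℝ A (1 / 2), by
      have : (2 : A) = algebraMap ℝ A 2 := (map_ofNat _ 2).symm
      rw [this, ← map_mul]; norm_num⟩
    obtain ⟨s, hs⟩ : ∃ s : A, s ^ 2 = h := ⟨algebraMap ℝ A (Real.sqrt (1 / 2)), by
      have h2 : (2 : A) = algebraMap ℝ A 2 := (map_ofNat _ 2).symm
      have h3 : h = algebraMap ℝ A (1 / 2) := by
        have h4 : algebraMap ℝ A (1 / 2) * 2 = 1 := by rw [h2, ← map_mul]; norm_num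
        linear_combination (-h) * h4 + algebraMap ℝ A (1 / 2) * hh
      rw [h3, ← map_pow, Real.sq_sqrt (by norm_num)]⟩
    obtain ⟨β, hβ⟩ := hw (s ^ 2 * (1 + x) ^ 2 * u) (fun b => by
      have e : (s ^ 2 * (1 + x) ^ 2 * u) * b ^ 2
          = (s * (1 + x) * u * b) ^ 2 + (s * (1 + x) * x * u * b) ^ 2 := by
        linear_combination (-s ^ 2 * (1 + x) ^ 2 * u * b ^ 2) * hu
      rw [e, map_add]; exact add_nonneg (hL1 _) (hL1 _)) (fun b => by
      have e : (1 - (s ^ 2 * (1 + x) ^ 2 * u)) * b ^ 2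
          = (s * (1 - x) * u * b) ^ 2 + (s * (1 - x) * x * u * b) ^ 2 := by
        have e2 : 2 * s ^ 2 = 1 := by rw [hs, hh]
        linear_combination (-s ^ 2 * (1 - x) ^ 2 * u * b ^ 2 - 2 * s ^ 2 * b ^ 2) * hu - b ^ 2 * e2
      rw [e, map_add]; exact add_nonneg (hL1 _) (hL1 _))
    have hxu : ∀ b, L1 (x * u * b) = (β - 1 / 2) * L1 b := by
      intro b
      have e : (s ^ 2 * (1 + x) ^ 2 * u) * b = (1 / 2 : ℝ) • b + x * u * b := by
        have e2 : 2 * s ^ 2 = 1 := by rw [hs, hh]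
        have e3 : (2 : A) * ((1 / 2 : ℝ) • b) = b := by
          rw [mul_smul_comm, two_mul, ← two_smul ℝ b, smul_smul]; norm_num
        linear_combination (s ^ 2 * b) * hu + (x * u * b + (1 / 2 : ℝ) • b) * e2 - s ^ 2 * e3
      have h1 := hβ b
      rw [e, map_add, map_smul, smul_eq_mul] at h1
      linarith
    have h1 : ∀ b, L1 b = α * L1 ((1 + x ^ 2) * b) := by
      intro b
      rw [← hα, ← mul_assoc, hu, one_mul]
    have hα0 : α ≠ 0 := by
      rintro rfl
      have := h1 (ψ p)
      rw [zero_mul] at this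
      linarith
    refine ⟨(β - 1 / 2) / α, fun _ b => ?_⟩
    have h2 : x * b = x * u * ((1 + x ^ 2) * b) := by linear_combination (-x * b) * hu
    rw [h2, hxu, h1 b]; field_simp
  choose l hl using hlam
  let T : MvPolynomial (Fin d) ℝ →ₐ[ℝ] Polynomial ℝ :=
    MvPolynomial.aeval fun j => if (j : ℕ) < d - 1 then Polynomial.C (l j) else Polynomial.X
  let η : Polynomial ℝ →ₐ[ℝ] A := Polynomial.aeval (ψ (MvPolynomial.X ⟨d - 1, by omega⟩))
  have hT : ∀ (r : MvPolynomial (Fin d) ℝ) (b : A), L1 (ψ r * b) = L1 (η (T r) * b) := by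
    intro r
    induction r using MvPolynomial.induction_on with
    | C c =>
      intro b
      have : (MvPolynomial.C c : MvPolynomial (Fin d) ℝ) = algebraMap ℝ _ c := rfl
      rw [this, AlgHom.commutes, AlgHom.commutes, AlgHom.commutes]
    | add p q h1 h2 =>
      intro b
      simp only [map_add, add_mul, h1, h2]
    | mul_X q j h =>
      intro b
      rw [map_mul ψ, map_mul T, map_mul η, mul_assoc, h, mul_assoc]
      have hTj : T (MvPolynomial.X j) =
          if (j : ℕ) < d - 1 then Polynomial.C (l j) else Polynomial.X := by
        simp only [T, MvPolynomial.aeval_X]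
      rw [hTj]
      by_cases hj : (j : ℕ) < d - 1
      · rw [if_pos hj]
        have h1 : η (Polynomial.C (l j)) = algebraMap ℝ A (l j) := Polynomial.aeval_C _ _
        rw [h1, mul_left_comm, hl j hj, mul_left_comm, ← Algebra.smul_def, map_smul, smul_eq_mul]
      · rw [if_neg hj]
        have h1 : η Polynomial.X = ψ (MvPolynomial.X j) := by
          have h2 : j = ⟨d - 1, by omega⟩ := by ext; simp; omega
          simp only [η, Polynomial.aeval_X]
          rw [← h2]
        rw [h1]
  have h1 := hT p 1
  rw [mul_one, mul_one] at h1
  have h2 := uni_nonneg _ (T p) le_rfl (fun t => by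
    have h3 : (T p).eval t = MvPolynomial.eval (fun j : Fin d => if (j : ℕ) < d - 1 then l j else t) p := by
      have h4 : ((Polynomial.aeval t).comp T) = MvPolynomial.aeval (R := ℝ)
          (fun j : Fin d => if (j : ℕ) < d - 1 then l j else t) := by
        apply MvPolynomial.algHom_ext
        intro j
        simp only [AlgHom.comp_apply, T, MvPolynomial.aeval_X]
        split_ifs <;> simp
      have h5 := AlgHom.congr_fun h4 p
      simpa [MvPolynomial.aeval_eq_eval, Polynomial.aeval_def] using h5
    rw [h3]; exact hp _) (L1 ∘ₗ η.toLinearMap) (fun a => by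
      have := hL1 (η a)
      rw [← map_pow] at this
      exact this)
  change 0 ≤ L1 (η (T p)) at h2
  linarith

open MeasureTheory CompactlySupported in
theorem haviland {σ : Type*} [Fintype σ] (L : MvPolynomial σ ℝ →ₗ[ℝ] ℝ)
    (hL : ∀ P, (∀ x, 0 ≤ MvPolynomial.eval x P) → 0 ≤ L P) :
    ∃ μ : Measure (σ → ℝ), ∀ P, Integrable (fun x => MvPolynomial.eval x P) μ ∧
      ∫ x, MvPolynomial.eval x P ∂μ = L P := by
  let s : PointedCone ℝ (MvPolynomial σ ℝ × C_c(σ → ℝ, ℝ)) :=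
    { carrier := {y | ∀ x, 0 ≤ MvPolynomial.eval x y.1 + y.2 x}
      add_mem' := by
        intro a b ha hb x
        have h1 := ha x
        have h2 := hb x
        simp only [Prod.fst_add, Prod.snd_add, map_add, CompactlySupportedContinuousMap.add_apply]
        linarith
      zero_mem' := by intro x; simp
      smul_mem' := by
        rintro ⟨c, hc⟩ a ha x
        have h1 := ha x
        have h2 : MvPolynomial.eval x ((⟨c, hc⟩ : {c : ℝ // 0 ≤ c}) • a).1 +
          ((⟨c, hc⟩ : {c : ℝ // 0 ≤ c}) • a).2 x = c * (MvPolynomial.eval x a.1 + a.2 x) := by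
          change MvPolynomial.eval x (c • a.1) + c • (a.2 x) = _
          rw [MvPolynomial.smul_eval, smul_eq_mul]; ring
        rw [h2]
        exact mul_nonneg hc h1 }
  have hs : ∀ y : MvPolynomial σ ℝ × C_c(σ → ℝ, ℝ), y ∈ s ↔ ∀ x, 0 ≤ MvPolynomial.eval x y.1 + y.2 x := fun y => Iff.rfl
  let f : (MvPolynomial σ ℝ × C_c(σ → ℝ, ℝ)) →ₗ.[ℝ] ℝ :=
    ⟨LinearMap.range (LinearMap.inl ℝ (MvPolynomial σ ℝ) C_c(σ → ℝ, ℝ)),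
      (L ∘ₗ LinearMap.fst ℝ _ _) ∘ₗ Submodule.subtype _⟩
  obtain ⟨g, hgf, hgs⟩ := riesz_extension s f (by
      rintro ⟨_, P, rfl⟩ hP
      refine hL P fun x => ?_
      simpa using hP x) (by
      rintro ⟨P, φ⟩
      obtain ⟨C, hC⟩ := φ.hasCompactSupport.exists_bound_of_continuous φ.continuous
      refine ⟨⟨_, MvPolynomial.C C - P, rfl⟩, fun x => ?_⟩
      have := neg_abs_le (φ x)
      have h2 := hC x
      rw [Real.norm_eq_abs] at h2
      simp
      linarith)
  have hgP : ∀ P, g (P, 0) = L P := fun P => hgf ⟨_, P, rfl⟩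
  let Λ : C_c(σ → ℝ, ℝ) →ₚ[ℝ] ℝ := PositiveLinearMap.mk₀ (g ∘ₗ LinearMap.inr ℝ _ _) (by
    intro φ hφ
    refine hgs _ fun x => ?_
    simpa using hφ x)
  let μ := RealRMK.rieszMeasure Λ
  have hμ : ∀ φ : C_c(σ → ℝ, ℝ), ∫ x, φ x ∂μ = g (0, φ) := fun φ => RealRMK.integral_rieszMeasure Λ φ
  have hμi : ∀ φ : C_c(σ → ℝ, ℝ), Integrable (fun x => φ x) μ := fun φ =>
    φ.continuous.integrable_of_hasCompactSupport φ.hasCompactSupport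
  let S : MvPolynomial σ ℝ := ∑ i, MvPolynomial.X i ^ 2
  have hS : ∀ x, MvPolynomial.eval x S = ∑ i, x i ^ 2 := by intro x; simp [S]
  have hS0 : ∀ x, 0 ≤ MvPolynomial.eval x S := by
    intro x; rw [hS]; exact Finset.sum_nonneg fun i _ => sq_nonneg _
  let χ : ℕ → (σ → ℝ) → ℝ := fun n x => max 0 (min 1 (2 - MvPolynomial.eval x S / (n + 1)))
  have hχc : ∀ n, Continuous (χ n) := by
    intro n
    have := MvPolynomial.continuous_eval S
    fun_prop
  have hχ0 : ∀ n x, 0 ≤ χ n x := fun n x => le_max_left _ _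
  have hχ1 : ∀ n x, χ n x ≤ 1 := fun n x => max_le zero_le_one (min_le_left _ _)
  have hχe : ∀ (n : ℕ) x, MvPolynomial.eval x S ≤ n + 1 → χ n x = 1 := by
    intro n x hx
    have hn : (0 : ℝ) < n + 1 := by positivity
    have : MvPolynomial.eval x S / (n + 1) ≤ 1 := (div_le_one hn).mpr hx
    simp only [χ]
    rw [min_eq_left (by linarith)]; simp
  have hχs : ∀ n, HasCompactSupport (χ n) := by
    intro n
    refine HasCompactSupport.intro (K := Set.univ.pi fun _ : σ =>
      Set.Icc (-(2 * (n + 1 : ℝ) + 1)) (2 * (n + 1 : ℝ) + 1))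
      (isCompact_univ_pi fun _ => isCompact_Icc) ?_
    intro x hx
    by_contra hne
    apply hx
    intro i _
    have hn : (0 : ℝ) < n + 1 := by positivity
    have h1 : MvPolynomial.eval x S ≤ 2 * (n + 1) := by
      by_contra hlt
      push Not at hlt
      apply hne
      have : 2 ≤ MvPolynomial.eval x S / (n + 1) := (le_div_iff₀ hn).mpr hlt.le
      simp only [χ]
      exact max_eq_left ((min_le_right _ _).trans (by linarith))
    have h2 : x i ^ 2 ≤ 2 * (n + 1) := by
      rw [hS] at h1
      exact (Finset.single_le_sum (f := fun i => x i ^ 2) (fun i _ => sq_nonneg _)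
        (Finset.mem_univ i)).trans h1
    constructor <;> nlinarith
  have main : ∀ P, (∀ x, 0 ≤ MvPolynomial.eval x P) →
      Integrable (fun x => MvPolynomial.eval x P) μ ∧ ∫ x, MvPolynomial.eval x P ∂μ = L P := by
    intro P hP
    have hPc := MvPolynomial.continuous_eval P
    let φ : ℕ → C_c(σ → ℝ, ℝ) := fun n =>
      { toFun := fun x => χ n x * MvPolynomial.eval x P
        continuous_toFun := (hχc n).mul hPc
        hasCompactSupport' := (hχs n).mul_right }
    have hφ : ∀ n x, φ n x = χ n x * MvPolynomial.eval x P := fun n x => rfl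
    have hφ0 : ∀ n x, 0 ≤ φ n x := fun n x => mul_nonneg (hχ0 n x) (hP x)
    have hφP : ∀ n x, φ n x ≤ MvPolynomial.eval x P := fun n x =>
      mul_le_of_le_one_left (hP x) (hχ1 n x)
    have up : ∀ n, ∫ x, φ n x ∂μ ≤ L P := by
      intro n
      have h1 := hgs (P, -φ n) (fun x => by have := hφP n x; simp; linarith)
      have h2 : (P, -φ n) = ((P, 0) : MvPolynomial σ ℝ × C_c(σ → ℝ, ℝ)) - (0, φ n) := by ext <;> simp
      rw [h2, map_sub, hgP, ← hμ] at h1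
      linarith
    have low : ∀ n : ℕ, L P - (1 / ((n : ℝ) + 1)) * L (P * S) ≤ ∫ x, φ n x ∂μ := by
      intro n
      have hn : (0 : ℝ) < n + 1 := by positivity
      have h1 := hgs ((1 / ((n : ℝ) + 1)) • (P * S) - P, φ n) (fun x => by
        simp only [map_sub, MvPolynomial.smul_eval, map_mul, hφ]
        rcases le_total (MvPolynomial.eval x S) (n + 1) with h | h
        · rw [hχe n x h]
          have := mul_nonneg (hP x) (hS0 x)
          have : 0 ≤ 1 / ((n : ℝ) + 1) * (MvPolynomial.eval x P * MvPolynomial.eval x S) := by positivity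
          linarith
        · have h3 : 1 ≤ MvPolynomial.eval x S / (n + 1) := (one_le_div hn).mpr h
          have h4 : MvPolynomial.eval x P * 1 ≤ MvPolynomial.eval x P * (MvPolynomial.eval x S / (n + 1)) :=
            mul_le_mul_of_nonneg_left h3 (hP x)
          have h5 : 1 / ((n : ℝ) + 1) * (MvPolynomial.eval x P * MvPolynomial.eval x S)
            = MvPolynomial.eval x P * (MvPolynomial.eval x S / (n + 1)) := by ring
          have h6 := mul_nonneg (hχ0 n x) (hP x)
          rw [h5]; linarith)
      have h2 : ((1 / ((n : ℝ) + 1)) • (P * S) - P, φ n) =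
          (1 / ((n : ℝ) + 1)) • ((P * S, 0) : MvPolynomial σ ℝ × C_c(σ → ℝ, ℝ)) - (P, 0) + (0, φ n) := by ext <;> simp
      rw [h2, map_add, map_sub, map_smul, hgP, hgP, ← hμ, smul_eq_mul] at h1
      linarith
    have hlim : Filter.Tendsto (fun n => ∫ x, φ n x ∂μ) Filter.atTop (nhds (L P)) := by
      refine tendsto_of_tendsto_of_tendsto_of_le_of_le ?_ tendsto_const_nhds low up
      have := (tendsto_one_div_add_atTop_nhds_zero_nat (𝕜 := ℝ)).mul_const (L (P * S))
      simpa using tendsto_const_nhds.sub this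
    have hptw : ∀ x, Filter.Tendsto (fun n => φ n x) Filter.atTop (nhds (MvPolynomial.eval x P)) := by
      intro x
      refine tendsto_const_nhds.congr' ?_
      filter_upwards [Filter.eventually_ge_atTop ⌈MvPolynomial.eval x S⌉₊] with n hn
      have h1 : MvPolynomial.eval x S ≤ n := (Nat.le_ceil _).trans (by exact_mod_cast hn)
      rw [hφ, hχe n x (by linarith), one_mul]
    have hint : Integrable (fun x => MvPolynomial.eval x P) μ := by
      refine ⟨hPc.aestronglyMeasurable, ?_⟩
      rw [hasFiniteIntegral_iff_ofReal (Filter.Eventually.of_forall hP)]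
      have h1 : ∀ x, ENNReal.ofReal (MvPolynomial.eval x P) =
          Filter.liminf (fun n => ENNReal.ofReal (φ n x)) Filter.atTop := fun x =>
        ((ENNReal.continuous_ofReal.tendsto _).comp (hptw x)).liminf_eq.symm
      calc ∫⁻ x, ENNReal.ofReal (MvPolynomial.eval x P) ∂μ
          = ∫⁻ x, Filter.liminf (fun n => ENNReal.ofReal (φ n x)) Filter.atTop ∂μ := by
            simp_rw [h1]
        _ ≤ Filter.liminf (fun n => ∫⁻ x, ENNReal.ofReal (φ n x) ∂μ) Filter.atTop :=
            lintegral_liminf_le fun n => (φ n).continuous.measurable.ennreal_ofReal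
        _ ≤ Filter.liminf (fun _ : ℕ => ENNReal.ofReal (L P)) Filter.atTop := by
            refine Filter.liminf_le_liminf (Filter.Eventually.of_forall fun n => ?_)
            rw [← ofReal_integral_eq_lintegral_ofReal (hμi (φ n)) (Filter.Eventually.of_forall (hφ0 n))]
            exact ENNReal.ofReal_le_ofReal (up n)
        _ < ⊤ := by simp
    refine ⟨hint, ?_⟩
    refine tendsto_nhds_unique (tendsto_integral_of_dominated_convergence _
      (fun n => (hμi (φ n)).aestronglyMeasurable) hint ?_ (Filter.Eventually.of_forall hptw)) hlim
    intro n
    refine Filter.Eventually.of_forall fun x => ?_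
    rw [Real.norm_of_nonneg (hφ0 n x)]; exact hφP n x
  refine ⟨μ, fun P => ?_⟩
  obtain ⟨i1, e1⟩ := main ((P + 1) ^ 2) (fun x => by rw [map_pow]; exact sq_nonneg _)
  obtain ⟨i2, e2⟩ := main ((P - 1) ^ 2) (fun x => by rw [map_pow]; exact sq_nonneg _)
  have e : (fun x => MvPolynomial.eval x P) = fun x => (1 / 4 : ℝ) * (MvPolynomial.eval x ((P + 1) ^ 2)
      - MvPolynomial.eval x ((P - 1) ^ 2)) := by
    funext x; simp only [map_pow, map_add, map_sub, map_one]; ring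
  rw [e]
  refine ⟨(i1.sub i2).const_mul _, ?_⟩
  rw [integral_const_mul, integral_sub i1 i2, e1, e2, ← map_sub]
  have : (P + 1) ^ 2 - (P - 1) ^ 2 = (4 : ℝ) • P := by
    rw [MvPolynomial.smul_eq_C_mul]
    have : (MvPolynomial.C (4 : ℝ) : MvPolynomial σ ℝ) = 4 := map_ofNat _ 4
    rw [this]; ring
  rw [this, map_smul, smul_eq_mul]; ring


/-- **Example 3.10.**  Let `d ≥ 1` and let `𝔻` be a finitely generated
multiplicative set in `ℝ[x₁,…,x_d]` (with `1 ∈ 𝔻`, `0 ∉ 𝔻`) containing the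
polynomials `1 + x_j²` for `j = 1,…,d−1` (all coordinates except the last).
Then every linear functional on `A = 𝔻⁻¹ℝ[x₁,…,x_d]` that is nonnegative on
squares is given by a positive Borel measure on `ℝ^d` vanishing on the zero
set of each `q ∈ 𝔻`. -/
theorem rational_mp_denominators_all_but_last_coordinate {d : ℕ} (hd : 1 ≤ d)
    (𝔻 : Submonoid (MvPolynomial (Fin d) ℝ)) (h𝔻0 : (0 : MvPolynomial (Fin d) ℝ) ∉ 𝔻)
    (h𝔻fg : 𝔻.FG)
    (hq : ∀ j : Fin d, (j : ℕ) < d - 1 →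
      (1 + MvPolynomial.X j ^ 2 : MvPolynomial (Fin d) ℝ) ∈ 𝔻)
    (L : Localization 𝔻 →ₗ[ℝ] ℝ) (hL : ∀ a : Localization 𝔻, 0 ≤ L (a ^ 2)) :
    ∃ μ : MeasureTheory.Measure (Fin d → ℝ),
      (∀ q ∈ 𝔻, μ {x : Fin d → ℝ | MvPolynomial.eval x q = 0} = 0) ∧
      ∀ (p : MvPolynomial (Fin d) ℝ) (q : MvPolynomial (Fin d) ℝ) (hq' : q ∈ 𝔻),
        MeasureTheory.Integrable
          (fun x : Fin d → ℝ => MvPolynomial.eval x p / MvPolynomial.eval x q) μ ∧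
        L (Localization.mk p ⟨q, hq'⟩) =
          ∫ x : Fin d → ℝ, MvPolynomial.eval x p / MvPolynomial.eval x q ∂μ := by
  classical
  obtain ⟨S, hS⟩ := h𝔻fg
  let Q : MvPolynomial (Fin d) ℝ := ∏ s ∈ S, s
  have hSD : ∀ s ∈ S, s ∈ 𝔻 := fun s hs => hS ▸ Submonoid.subset_closure hs
  have hQD : Q ∈ 𝔻 := Submonoid.prod_mem _ hSD
  have hdvd : ∀ q ∈ 𝔻, ∃ (k : ℕ) (r : MvPolynomial (Fin d) ℝ), q * r = Q ^ k := by
    intro q hq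
    rw [← hS] at hq
    induction hq using Submonoid.closure_induction with
    | mem x hx =>
      obtain ⟨r, hr⟩ := Finset.dvd_prod_of_mem (fun s => s) hx
      exact ⟨1, r, by rw [pow_one]; exact hr.symm⟩
    | one => exact ⟨0, 1, by simp⟩
    | mul x y _ _ hx hy =>
      obtain ⟨k, r, h1⟩ := hx
      obtain ⟨m, t, h2⟩ := hy
      exact ⟨k + m, r * t, by rw [pow_add, ← h1, ← h2]; ring⟩
  let ψ : MvPolynomial (Fin d) ℝ →ₐ[ℝ] Localization 𝔻 := IsScalarTower.toAlgHom ℝ _ _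
  have hψ : ∀ p, ψ p = algebraMap _ (Localization 𝔻) p := fun p => rfl
  have hmk : ∀ (p q : MvPolynomial (Fin d) ℝ) (hq : q ∈ 𝔻),
      ψ q * Localization.mk p ⟨q, hq⟩ = ψ p := by
    intro p q hq
    rw [hψ, hψ, Localization.mk_eq_mk', mul_comm]
    exact IsLocalization.mk'_spec _ p (⟨q, hq⟩ : 𝔻)
  have hinv : ∀ q ∈ 𝔻, ∃ u, u * ψ q = 1 := fun q hq =>
    ⟨Localization.mk 1 ⟨q, hq⟩, by rw [mul_comm, hmk, map_one]⟩
  obtain ⟨y, hy⟩ := hinv Q hQD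
  let φ : MvPolynomial (Option (Fin d)) ℝ →ₐ[ℝ] Localization 𝔻 :=
    MvPolynomial.aeval fun o => o.elim y fun i => ψ (MvPolynomial.X i)
  have hφy : φ (MvPolynomial.X none) = y := by simp [φ]
  have hφs : ∀ p, φ (MvPolynomial.rename some p) = ψ p := by
    intro p
    have : φ.comp (MvPolynomial.rename some) = ψ := by
      apply MvPolynomial.algHom_ext
      intro i
      simp [φ]
    exact AlgHom.congr_fun this p
  have hφmk : ∀ (p q : MvPolynomial (Fin d) ℝ) (hq : q ∈ 𝔻) (k : ℕ) (r), q * r = Q ^ k →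
      φ (MvPolynomial.rename some (p * r) * MvPolynomial.X none ^ k) = Localization.mk p ⟨q, hq⟩ := by
    intro p q hq k r hr
    rw [map_mul, map_pow, hφy, hφs, map_mul, ← hmk p q hq]
    have h1 : ψ q * ψ r = ψ Q ^ k := by rw [← map_mul, hr, map_pow]
    have h2 : y ^ k * ψ Q ^ k = 1 := by rw [← mul_pow, hy, one_pow]
    linear_combination (Localization.mk p ⟨q, hq⟩) * (y ^ k) * h1 + (Localization.mk p ⟨q, hq⟩) * h2
  have hφsurj : Function.Surjective φ := by
    intro a
    induction a using Localization.induction_on with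
    | H a =>
      obtain ⟨p, q, hq⟩ := a
      obtain ⟨k, r, hr⟩ := hdvd q hq
      exact ⟨_, hφmk p q hq k r hr⟩
  have hQnz : ∀ x, MvPolynomial.eval x Q ≠ 0 → ∀ q ∈ 𝔻, MvPolynomial.eval x q ≠ 0 := by
    intro x hx q hq h0
    obtain ⟨k, r, hr⟩ := hdvd q hq
    have := congrArg (MvPolynomial.eval x) hr
    rw [map_mul, h0, zero_mul, map_pow] at this
    exact pow_ne_zero k hx this.symm
  have hkey : ∀ M : Localization 𝔻 →ₗ[ℝ] ℝ, (∀ a, 0 ≤ M (a ^ 2)) → ∀ p,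
      (∀ x, 0 ≤ MvPolynomial.eval x p) → 0 ≤ M (ψ p) := fun M hM p hp =>
    key_nonneg φ hφsurj hd ψ (fun j hj => by
      obtain ⟨u, hu⟩ := hinv _ (hq j hj)
      exact ⟨u, by simpa using hu⟩) M hM p hp
  obtain ⟨ν, hν⟩ := haviland (L ∘ₗ φ.toLinearMap) (by
    intro P hP
    change 0 ≤ L (φ P)
    obtain ⟨a, ha⟩ : ∃ a, a = φ P := ⟨_, rfl⟩
    rw [← ha]
    induction a using Localization.induction_on with
    | H a =>
    obtain ⟨p, q, hqD⟩ := a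
    obtain ⟨u, hu⟩ := hinv q hqD
    have hpq : ∀ x, 0 ≤ MvPolynomial.eval x (p * q * Q ^ 2) := by
      intro x
      by_cases hx : MvPolynomial.eval x Q = 0
      · simp [hx]
      let ev : Localization 𝔻 →+* ℝ := IsLocalization.lift (M := 𝔻) (g := MvPolynomial.eval x)
        (fun z => (hQnz x hx z z.2).isUnit)
      have hev : ∀ p, ev (ψ p) = MvPolynomial.eval x p := fun p => IsLocalization.lift_eq _ p
      have hevy : ev y * MvPolynomial.eval x Q = 1 := by
        rw [← hev, ← map_mul, hy, map_one]
      have hevφ : ev (φ P) = MvPolynomial.eval (fun o : Option (Fin d) => o.elim (ev y) x) P := by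
        have h1 : ev.comp (φ : MvPolynomial (Option (Fin d)) ℝ →+* Localization 𝔻)
            = MvPolynomial.eval (fun o : Option (Fin d) => o.elim (ev y) x) := by
          apply MvPolynomial.ringHom_ext
          · intro c
            have h2 : (MvPolynomial.C c : MvPolynomial (Option (Fin d)) ℝ)
              = MvPolynomial.rename some (MvPolynomial.C c) := by simp
            rw [RingHom.comp_apply]
            change ev (φ _) = _
            rw [MvPolynomial.eval_C, h2, hφs, hev, MvPolynomial.eval_C]
          · intro o
            rw [RingHom.comp_apply]
            change ev (φ _) = _
            cases o with
            | none => simp [hφy]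
            | some i =>
              have h2 : (MvPolynomial.X (some i) : MvPolynomial (Option (Fin d)) ℝ)
                = MvPolynomial.rename some (MvPolynomial.X i) := by simp
              rw [h2, hφs, hev]; simp
        exact RingHom.congr_fun h1 P
      have h3 : 0 ≤ ev (φ P) := hevφ ▸ hP _
      have h4 : MvPolynomial.eval x q * ev (φ P) = MvPolynomial.eval x p := by
        rw [← ha, ← hev q, ← map_mul]
        rw [hmk p q hqD, hev]
      rw [map_mul, map_mul, map_pow, ← h4]
      have : MvPolynomial.eval x q * ev (φ P) * MvPolynomial.eval x q * MvPolynomial.eval x Q ^ 2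
        = ev (φ P) * (MvPolynomial.eval x q * MvPolynomial.eval x Q) ^ 2 := by ring
      rw [this]; positivity
    have h5 := hkey (L ∘ₗ LinearMap.mulLeft ℝ ((u * y) ^ 2)) (fun a => by
      have := hL (u * y * a)
      rw [mul_pow] at this
      exact this) _ hpq
    have h6 : (u * y) ^ 2 * ψ (p * q * Q ^ 2) = Localization.mk p ⟨q, hqD⟩ := by
      simp only [map_mul, map_pow]
      rw [← hmk p q hqD]
      have h7 : (u * ψ q) ^ 2 * (y * ψ Q) ^ 2 = 1 := by rw [hu, hy]; simp
      linear_combination (Localization.mk p ⟨q, hqD⟩) * h7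
    rw [← h6]; exact h5)
  have hsupp : ∀ᵐ z ∂ν, z none * MvPolynomial.eval (fun i => z (some i)) Q = 1 := by
    obtain ⟨i1, e1⟩ := hν ((MvPolynomial.X none * MvPolynomial.rename some Q - 1) ^ 2)
    have h0 : φ ((MvPolynomial.X none * MvPolynomial.rename some Q - 1) ^ 2) = 0 := by
      rw [map_pow, map_sub, map_mul, hφy, hφs, hy]; simp
    have e2 : (L ∘ₗ φ.toLinearMap) ((MvPolynomial.X none * MvPolynomial.rename some Q - 1) ^ 2) = 0 := by
      change L (φ _) = 0
      rw [h0, map_zero]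
    rw [e2, MeasureTheory.integral_eq_zero_iff_of_nonneg (fun z => by
      rw [map_pow]; exact sq_nonneg _) i1] at e1
    filter_upwards [e1] with z hz
    have hz' : (z none * MvPolynomial.eval (fun i => z (some i)) Q - 1) ^ 2 = 0 := by
      simpa [MvPolynomial.eval_rename, Function.comp_def] using hz
    have := pow_eq_zero_iff (two_ne_zero) |>.mp hz'
    linarith
  let π : (Option (Fin d) → ℝ) → (Fin d → ℝ) := fun z i => z (some i)
  have hπ : Measurable π := by fun_prop
  refine ⟨ν.map π, ?_, ?_⟩
  · intro q hq
    have hm : MeasurableSet {x : Fin d → ℝ | MvPolynomial.eval x q = 0} :=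
      (isClosed_eq (MvPolynomial.continuous_eval q) continuous_const).measurableSet
    rw [MeasureTheory.Measure.map_apply hπ hm, ← MeasureTheory.compl_mem_ae_iff]
    filter_upwards [hsupp] with z hz
    refine hQnz (π z) ?_ q hq
    intro h0
    change z none * MvPolynomial.eval (π z) Q = 1 at hz
    rw [h0, mul_zero] at hz
    exact zero_ne_one hz
  · intro p q hq
    obtain ⟨k, r, hr⟩ := hdvd q hq
    obtain ⟨i1, e1⟩ := hν (MvPolynomial.rename some (p * r) * MvPolynomial.X none ^ k)
    have hm : Measurable (fun x : Fin d → ℝ => MvPolynomial.eval x p / MvPolynomial.eval x q) :=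
      (MvPolynomial.continuous_eval p).measurable.div (MvPolynomial.continuous_eval q).measurable
    have hae : (fun z => MvPolynomial.eval z (MvPolynomial.rename some (p * r) * MvPolynomial.X none ^ k))
        =ᵐ[ν] fun z => MvPolynomial.eval (π z) p / MvPolynomial.eval (π z) q := by
      filter_upwards [hsupp] with z hz
      change z none * MvPolynomial.eval (π z) Q = 1 at hz
      have hQ0 : MvPolynomial.eval (π z) Q ≠ 0 := by
        intro h0
        rw [h0, mul_zero] at hz
        exact zero_ne_one hz
      have hq0 := hQnz (π z) hQ0 q hq
      have h1 : MvPolynomial.eval z (MvPolynomial.rename some (p * r) * MvPolynomial.X none ^ k)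
        = MvPolynomial.eval (π z) p * MvPolynomial.eval (π z) r * z none ^ k := by
        simp [MvPolynomial.eval_rename, Function.comp_def, π]
      have h2 := congrArg (MvPolynomial.eval (π z)) hr
      rw [map_mul, map_pow] at h2
      have h3 : z none ^ k * MvPolynomial.eval (π z) Q ^ k = 1 := by rw [← mul_pow, hz, one_pow]
      rw [h1, eq_div_iff hq0]
      linear_combination MvPolynomial.eval (π z) p * z none ^ k * h2 + MvPolynomial.eval (π z) p * h3
    constructor
    · rw [MeasureTheory.integrable_map_measure hm.aestronglyMeasurable hπ.aemeasurable]
      exact i1.congr hae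
    · rw [MeasureTheory.integral_map hπ.aemeasurable hm.aestronglyMeasurable,
        ← MeasureTheory.integral_congr_ae hae, e1]
      change _ = L (φ _)
      rw [hφmk p q hq k r hr]
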